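/- Let X, Y ⊆ ω. There exists an embedding of pcas of K1^X into K2^Y if and only if X is Turing reducible to Y. -/

import Mathlib

namespace PCAEmb

/-! ### Oracle computability -/

/-- Codes for partial functions computable relative to an oracle. -/
inductive OCode : Type
  | zero : OCode
  | succ : OCode
  | left : OCode
  | right : OCode
  | oracle : OCode
  | pair : OCode → OCode → OCode
  | comp : OCode → OCode → OCode
  | prec : OCode → OCode → OCode
  | rfind' : OCode → OCode

/-- Evaluation of an oracle code, relative to a (partial) oracle `O`. -/
def evalo (O : ℕ →. ℕ) : OCode → ℕ →. ℕ
  | .zero => pure 0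
  | .succ => Nat.succ
  | .left => ↑fun n : ℕ => n.unpair.1
  | .right => ↑fun n : ℕ => n.unpair.2
  | .oracle => O
  | .pair cf cg => fun n => Nat.pair <$> evalo O cf n <*> evalo O cg n
  | .comp cf cg => fun n => evalo O cg n >>= evalo O cf
  | .prec cf cg =>
      Nat.unpaired fun a n =>
        n.rec (evalo O cf a) fun y IH => do
          let i ← IH
          evalo O cg (Nat.pair a (Nat.pair y i))
  | .rfind' cf =>
      Nat.unpaired fun a m =>
        (Nat.rfind fun n => (fun x => x = 0) <$> evalo O cf (Nat.pair a (n + m))).map (· + m)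

/-- The standard numbering of oracle codes. -/
def OCode.ofNat : ℕ → OCode
  | 0 => .zero
  | 1 => .succ
  | 2 => .left
  | 3 => .right
  | 4 => .oracle
  | n + 5 =>
    match n % 4 with
    | 0 => .pair (OCode.ofNat (n / 4).unpair.1) (OCode.ofNat (n / 4).unpair.2)
    | 1 => .comp (OCode.ofNat (n / 4).unpair.1) (OCode.ofNat (n / 4).unpair.2)
    | 2 => .prec (OCode.ofNat (n / 4).unpair.1) (OCode.ofNat (n / 4).unpair.2)
    | _ => .rfind' (OCode.ofNat (n / 4).unpair.1)
  decreasing_by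
    all_goals
      have h1 := Nat.unpair_left_le (n / 4)
      have h2 := Nat.unpair_right_le (n / 4)
      have h3 := Nat.div_le_self n 4
      omega

/-- The `e`-th Turing functional with oracle `O` : `Φ_e^O`. -/
def phi (O : ℕ →. ℕ) (e : ℕ) : ℕ →. ℕ := evalo O (OCode.ofNat e)

/-- The characteristic function of a set of naturals, as a (total) partial function. -/
noncomputable def chi (X : Set ℕ) : ℕ →. ℕ :=
  fun n => Part.some (X.indicator (fun _ => 1) n)

/-- `ψ` is partial computable relative to the oracle `O`. -/
def RecursiveIn (O : ℕ →. ℕ) (ψ : ℕ →. ℕ) : Prop := ∃ c : OCode, evalo O c = ψ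

/-- Turing reducibility of sets of naturals. -/
def TuringLE (X Y : Set ℕ) : Prop := RecursiveIn (chi Y) (chi X)

/-- A total function `d : ℕ → ℕ` is `Y`-computable. -/
def ComputableIn (Y : Set ℕ) (d : ℕ → ℕ) : Prop :=
  RecursiveIn (chi Y) (fun n => Part.some (d n))

/-- A binary relation on `ℕ` is `Y`-c.e. -/
def CEIn (Y : Set ℕ) (R : ℕ → ℕ → Prop) : Prop :=
  ∃ c : OCode, ∀ n m, R n m ↔ (evalo (chi Y) c (Nat.pair n m)).Dom

/-- A set `W ⊆ ℕ` is `Y`-c.e. -/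
def CE1In (Y : Set ℕ) (W : Set ℕ) : Prop :=
  ∃ c : OCode, ∀ n, n ∈ W ↔ (evalo (chi Y) c n).Dom

/-- The canonical finite set `D_u` with code `u` (binary coding). -/
def Du (u : ℕ) : Set ℕ := {k | u.testBit k}

/-- Enumeration reducibility: `Z ≤ₑ Y`. -/
def EnumLE (Z Y : Set ℕ) : Prop :=
  ∃ W : Set ℕ, CE1In ∅ W ∧ ∀ x, x ∈ Z ↔ ∃ u, Nat.pair x u ∈ W ∧ Du u ⊆ Y

/-- The Turing jump `X'` of a set `X`. -/
def jump (X : Set ℕ) : Set ℕ := {e | (phi (chi X) e e).Dom}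

/-- The halting set `K = {e : φ_e(e)↓}`. -/
def Khalt : Set ℕ := jump ∅

/-! ### Partial combinatory algebras -/

/-- `k·a·b` as a partial element. -/
def app2 {α : Type*} (app : α → α → Part α) (a b c : α) : Part α :=
  (app a b).bind fun x => app x c

/-- `s·a·b·c` as a partial element. -/
def app3 {α : Type*} (app : α → α → Part α) (a b c d : α) : Part α :=
  (app2 app a b c).bind fun x => app x d

/-- A partial applicative structure is a pca if it has (distinct) combinators `s` and `k`. -/
def IsPCA {α : Type*} (app : α → α → Part α) : Prop :=
  ∃ s k : α, s ≠ k ∧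
    (∀ a b : α, app2 app k a b = Part.some a) ∧
    (∀ a b : α, (app2 app s a b).Dom) ∧
    (∀ a b c : α,
      app3 app s a b c = (app a c).bind fun x => (app b c).bind fun y => app x y)

/-- An embedding of partial combinatory algebras: an injection that preserves
(defined) application. -/
def IsPCAEmbedding {α β : Type*} (appA : α → α → Part α) (appB : β → β → Part β)
    (f : α → β) : Prop :=
  Function.Injective f ∧ ∀ a a' c : α, c ∈ appA a a' → f c ∈ appB (f a) (f a')

/-! ### Partial numberings -/

/-- `γ : ℕ ⇀ α` is a partial numbering (i.e. surjective). -/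
def IsNumbering {α : Type*} (γ : ℕ →. α) : Prop := ∀ a : α, ∃ n, a ∈ γ n

/-- `d` is an `(a⊥, a⊤)`-decider for `X` with respect to `γ`. -/
def IsDecider {α : Type*} (γ : ℕ →. α) (abot atop : α) (X : Set ℕ) (d : ℕ → ℕ) : Prop :=
  ∀ n, (n ∉ X → γ (d n) = Part.some abot) ∧ (n ∈ X → γ (d n) = Part.some atop)

/-- `γ` has `Y`-c.e. inequivalence. -/
def CEInequiv {α : Type*} (Y : Set ℕ) (γ : ℕ →. α) : Prop :=
  ∃ R : ℕ → ℕ → Prop, CEIn Y R ∧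
    ∀ n m, (γ n).Dom → (γ m).Dom → (R n m ↔ γ n ≠ γ m)

/-- `γ` is a `Y`-effectively pca-valued partial numbering: the application is
represented on codes by a partial `Y`-computable function `ψ`. -/
def EffValued {α : Type*} (Y : Set ℕ) (app : α → α → Part α) (γ : ℕ →. α) : Prop :=
  ∃ ψ : ℕ →. ℕ, RecursiveIn (chi Y) ψ ∧
    ∀ (n m : ℕ) (a b c : α), a ∈ γ n → b ∈ γ m → c ∈ app a b →
      ∃ j, j ∈ ψ (Nat.pair n m) ∧ c ∈ γ j

/-- `γ` is a strongly `Y`-effectively pca-valued partial numbering. -/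
def StrongEffValued {α : Type*} (Y : Set ℕ) (app : α → α → Part α) (γ : ℕ →. α) : Prop :=
  ∃ ψ : ℕ →. ℕ, RecursiveIn (chi Y) ψ ∧
    (∀ (n m : ℕ) (a b c : α), a ∈ γ n → b ∈ γ m → c ∈ app a b →
      ∃ j, j ∈ ψ (Nat.pair n m) ∧ c ∈ γ j) ∧
    (∀ (n m k l : ℕ) (a b a' b' c : α), a ∈ γ n → b ∈ γ m → a' ∈ γ k → b' ∈ γ l →
      c ∈ app a b → c ∈ app a' b' → ψ (Nat.pair n m) = ψ (Nat.pair k l))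

/-! ### The models -/

/-- Kleene's first model relativized to `X`: application `n · m = Φ_n^X(m)`. -/
noncomputable def k1App (X : Set ℕ) : ℕ → ℕ → Part ℕ := fun n m => phi (chi X) n m

/-- A total function as a partial function. -/
def toPFun (g : ℕ → ℕ) : ℕ →. ℕ := fun n => Part.some (g n)

/-- Join `f ⊕ g` of two partial functions. -/
def pjoin (f g : ℕ →. ℕ) : ℕ →. ℕ := fun n =>
  if n % 2 = 0 then f (n / 2) else g (n / 2)

/-- The totalization of a partial function, as a partial element of `ℕ → ℕ`:
defined iff `ψ` is total. -/
def partToTotal (ψ : ℕ →. ℕ) : Part (ℕ → ℕ) :=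
  ⟨∀ n, (ψ n).Dom, fun H n => (ψ n).get (H n)⟩

/-- Application in Kleene's second model `K₂`: `g · h = Φ^{g⊕h}_{g 0}`,
defined iff this function is total. -/
def k2App (g h : ℕ → ℕ) : Part (ℕ → ℕ) :=
  partToTotal (phi (pjoin (toPFun g) (toPFun h)) (g 0))

/-- Application in van Oosten's sequential model `B`: `θ · ρ = Φ^{θ⊕ρ}_{θ 0}`
(always defined, as a partial function). -/
def bApp (θ ρ : ℕ →. ℕ) : Part (ℕ →. ℕ) :=
  Part.some (fun n => (θ 0).bind fun e => phi (pjoin θ ρ) e n)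

/-- Restriction of a partial applicative structure to a subset. -/
def subApp {α : Type*} (app : α → α → Part α) (P : α → Prop)
    (a b : Subtype P) : Part (Subtype P) :=
  (app a.1 b.1).bind fun c => Part.assert (P c) fun h => Part.some ⟨c, h⟩

/-- Carrier of `K₂^X` : the total `X`-computable functions. -/
def K2el (X : Set ℕ) : Type := {g : ℕ → ℕ // RecursiveIn (chi X) (toPFun g)}

/-- Application in `K₂^X`. -/
def k2XApp (X : Set ℕ) : K2el X → K2el X → Part (K2el X) :=
  subApp k2App _

/-- Carrier of `B^X` : the partial `X`-computable functions. -/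
def Bel (X : Set ℕ) : Type := {θ : ℕ →. ℕ // RecursiveIn (chi X) θ}

/-- Application in `B^X`. -/
def bXApp (X : Set ℕ) : Bel X → Bel X → Part (Bel X) :=
  subApp bApp _

/-- Application in Scott's graph model `G`. -/
def gApp (A B : Set ℕ) : Part (Set ℕ) :=
  Part.some {n | ∃ u, Nat.pair n u ∈ A ∧ Du u ⊆ B}

/-- Carrier of `G^Z` : the sets enumeration-reducible to `Z`. -/
def Gel (Z : Set ℕ) : Type := {A : Set ℕ // EnumLE A Z}

/-- Application in `G^Z`. -/
def gXApp (Z : Set ℕ) : Gel Z → Gel Z → Part (Gel Z) :=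
  subApp gApp _

/-- `X ⊕ X̄ = {2n : n ∈ X} ∪ {2n+1 : n ∉ X}`. -/
def joinCompl (X : Set ℕ) : Set ℕ :=
  {k | ∃ n, (k = 2 * n ∧ n ∈ X) ∨ (k = 2 * n + 1 ∧ n ∉ X)}

/-! ### The λ-calculus -/

/-- Untyped λ-terms (de Bruijn representation). -/
inductive Lam : Type
  | var : ℕ → Lam
  | app : Lam → Lam → Lam
  | abs : Lam → Lam

/-- Lift (shift up) the free variables `≥ d` of a term. -/
def Lam.lift : Lam → ℕ → Lam
  | .var n, d => if n < d then .var n else .var (n + 1)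
  | .app M N, d => .app (M.lift d) (N.lift d)
  | .abs M, d => .abs (M.lift (d + 1))

/-- Substitution `M[k := N]` (de Bruijn). -/
def Lam.subst : Lam → ℕ → Lam → Lam
  | .var n, k, N => if n = k then N else if k < n then .var (n - 1) else .var n
  | .app M M', k, N => .app (M.subst k N) (M'.subst k N)
  | .abs M, k, N => .abs (M.subst (k + 1) (N.lift 0))

/-- β-equivalence of λ-terms. -/
inductive BetaEq : Lam → Lam → Prop
  | beta (M N : Lam) : BetaEq (.app (.abs M) N) (M.subst 0 N)
  | refl (M : Lam) : BetaEq M M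
  | symm {M N : Lam} : BetaEq M N → BetaEq N M
  | trans {M N P : Lam} : BetaEq M N → BetaEq N P → BetaEq M P
  | appCongr {M M' N N' : Lam} :
      BetaEq M M' → BetaEq N N' → BetaEq (.app M N) (.app M' N')
  | absCongr {M M' : Lam} : BetaEq M M' → BetaEq (.abs M) (.abs M')

/-- βη-equivalence of λ-terms. -/
inductive BetaEtaEq : Lam → Lam → Prop
  | beta (M N : Lam) : BetaEtaEq (.app (.abs M) N) (M.subst 0 N)
  | eta (M : Lam) : BetaEtaEq (.abs (.app (M.lift 0) (.var 0))) M
  | refl (M : Lam) : BetaEtaEq M M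
  | symm {M N : Lam} : BetaEtaEq M N → BetaEtaEq N M
  | trans {M N P : Lam} : BetaEtaEq M N → BetaEtaEq N P → BetaEtaEq M P
  | appCongr {M M' N N' : Lam} :
      BetaEtaEq M M' → BetaEtaEq N N' → BetaEtaEq (.app M N) (.app M' N')
  | absCongr {M M' : Lam} : BetaEtaEq M M' → BetaEtaEq (.abs M) (.abs M')

def lamBetaSetoid : Setoid Lam := ⟨BetaEq, ⟨BetaEq.refl, BetaEq.symm, BetaEq.trans⟩⟩

def lamBetaEtaSetoid : Setoid Lam :=
  ⟨BetaEtaEq, ⟨BetaEtaEq.refl, BetaEtaEq.symm, BetaEtaEq.trans⟩⟩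

/-- The pca `λ` of λ-terms modulo β-equivalence. -/
def LamBeta : Type := Quotient lamBetaSetoid

/-- The pca `λη` of λ-terms modulo βη-equivalence. -/
def LamBetaEta : Type := Quotient lamBetaEtaSetoid

/-- Application in `λ` (total). -/
def lamBetaApp : LamBeta → LamBeta → Part LamBeta := fun a b =>
  Part.some (Quotient.map₂ Lam.app (fun _ _ h1 _ _ h2 => BetaEq.appCongr h1 h2) a b)

/-- Application in `λη` (total). -/
def lamBetaEtaApp : LamBetaEta → LamBetaEta → Part LamBetaEta := fun a b =>
  Part.some (Quotient.map₂ Lam.app (fun _ _ h1 _ _ h2 => BetaEtaEq.appCongr h1 h2) a b)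

/-!
If `X` is reducible to `Y`, represent `n` in `K2` by the sequence `e, n, χ 0, χ 1, …`, where `χ` is
the characteristic function of `X` and `e` is an index of a functional that reads `a`, `m` and `χ`
off its two arguments, simulates the `a`-th functional with oracle `χ` on `m`, and copies `e` and
`χ` to its output.

Conversely, let `f` be an embedding. The index `1` of the successor gives `f 1 · f n = f (n + 1)`,
so the sequences `f n` are `Y`-computable uniformly in `n`. The index `4` of the oracle gives
`f 4 · f n = f (χ n)`; evaluating this at a place where `f 0` and `f 1` differ decides `n ∈ X` from
`Y`.

Both directions need a universal machine for oracle computations. A halting computation queries only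
a finite prefix of its oracle, and a computation from a given finite prefix is simulated by an
ordinary code, to which the universal function of Mathlib applies.
-/

open Filter

section Codes

variable {O : ℕ →. ℕ} {c d : OCode} {n a b : ℕ}

theorem evalo_pair_of_eq (hc : evalo O c n = Part.some a) (hd : evalo O d n = Part.some b) :
    evalo O (.pair c d) n = Part.some (Nat.pair a b) := by
  simp [evalo, hc, hd, Seq.seq]

theorem evalo_comp_of_eq (hd : evalo O d n = Part.some a) :
    evalo O (.comp c d) n = evalo O c a := by
  simp only [evalo, hd]
  exact Part.bind_some _ _

theorem mem_evalo_pair {v : ℕ} : v ∈ evalo O (.pair c d) n ↔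
    ∃ a ∈ evalo O c n, ∃ b ∈ evalo O d n, Nat.pair a b = v := by
  simp [evalo, Seq.seq]

theorem exists_evalo_eq_of_partrec {f : ℕ →. ℕ} (hf : Nat.Partrec f) :
    ∃ c : OCode, ∀ O, evalo O c = f := by
  induction hf with
  | zero => exact ⟨.zero, fun _ => rfl⟩
  | succ => exact ⟨.succ, fun _ => rfl⟩
  | left => exact ⟨.left, fun _ => rfl⟩
  | right => exact ⟨.right, fun _ => rfl⟩
  | pair _ _ ihf ihg =>
    obtain ⟨⟨cf, hf⟩, cg, hg⟩ := And.intro ihf ihg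
    exact ⟨.pair cf cg, fun O => by simp only [evalo, hf O, hg O]; rfl⟩
  | comp _ _ ihf ihg =>
    obtain ⟨⟨cf, hf⟩, cg, hg⟩ := And.intro ihf ihg
    exact ⟨.comp cf cg, fun O => by simp only [evalo, hf O, hg O]; rfl⟩
  | prec _ _ ihf ihg =>
    obtain ⟨⟨cf, hf⟩, cg, hg⟩ := And.intro ihf ihg
    exact ⟨.prec cf cg, fun O => by simp only [evalo, hf O, hg O]; rfl⟩
  | rfind _ ih =>
    obtain ⟨cf, hf⟩ := ih
    refine ⟨.comp (.rfind' cf) (.pair (.pair .left .right) .zero), fun O => funext fun n => ?_⟩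
    simp [evalo, hf O, Seq.seq, pure, PFun.pure]
    rfl

/-- A code computing the primitive recursive function `f` from every oracle, used to build oracle
codes out of explicit arithmetic. -/
noncomputable def OCode.ofPrimrec (f : ℕ → ℕ) (hf : Primrec f) : OCode :=
  (exists_evalo_eq_of_partrec (Nat.Partrec.of_primrec (Primrec.nat_iff.1 hf))).choose

@[simp]
theorem evalo_ofPrimrec {f : ℕ → ℕ} (hf : Primrec f) (n : ℕ) :
    evalo O (.ofPrimrec f hf) n = Part.some (f n) :=
  congrFun ((exists_evalo_eq_of_partrec
    (Nat.Partrec.of_primrec (Primrec.nat_iff.1 hf))).choose_spec O) n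

theorem evalo_comp_ofPrimrec (c : OCode) {f : ℕ → ℕ} (hf : Primrec f) (n : ℕ) :
    evalo O (.comp c (.ofPrimrec f hf)) n = evalo O c (f n) :=
  evalo_comp_of_eq (evalo_ofPrimrec hf n)

theorem evalo_comp_pair_id (O : ℕ →. ℕ) (c d : OCode) (n : ℕ) :
    evalo O (.comp c (.pair (.ofPrimrec _ Primrec.id) d)) n =
      (evalo O d n).bind fun a => evalo O c (Nat.pair n a) := by
  have hpair : evalo O (.pair (.ofPrimrec _ Primrec.id) d) n =
      (evalo O d n).map (Nat.pair n) := by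
    simp [evalo, Seq.seq]
  change Part.bind (evalo O (.pair (.ofPrimrec _ Primrec.id) d) n) (evalo O c) = _
  rw [hpair]
  exact Part.bind_map _ _ _

theorem OCode.ofNat_surjective : Function.Surjective OCode.ofNat := by
  intro c
  induction c with
  | zero => exact ⟨0, by simp [OCode.ofNat]⟩
  | succ => exact ⟨1, by simp [OCode.ofNat]⟩
  | left => exact ⟨2, by simp [OCode.ofNat]⟩
  | right => exact ⟨3, by simp [OCode.ofNat]⟩
  | oracle => exact ⟨4, by simp [OCode.ofNat]⟩
  | pair f g ihf ihg =>
    obtain ⟨⟨a, rfl⟩, b, rfl⟩ := And.intro ihf ihg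
    exact ⟨4 * Nat.pair a b + 5, by simp [OCode.ofNat]⟩
  | comp f g ihf ihg =>
    obtain ⟨⟨a, rfl⟩, b, rfl⟩ := And.intro ihf ihg
    exact ⟨4 * Nat.pair a b + 1 + 5, by simp [OCode.ofNat, Nat.mul_add_div]⟩
  | prec f g ihf ihg =>
    obtain ⟨⟨a, rfl⟩, b, rfl⟩ := And.intro ihf ihg
    exact ⟨4 * Nat.pair a b + 2 + 5, by simp [OCode.ofNat, Nat.mul_add_div]⟩
  | rfind' f ihf =>
    obtain ⟨a, rfl⟩ := ihf
    exact ⟨4 * Nat.pair a 0 + 3 + 5, by simp [OCode.ofNat, Nat.mul_add_div]⟩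

end Codes

section Continuity

variable {ι α β : Type*} {l : Filter ι}

theorem eventually_mem_bind {p : ι → Part α} {P : Part α} {q : ι → α → Part β} {Q : α → Part β}
    (hp : ∀ a ∈ P, ∀ᶠ i in l, a ∈ p i) (hq : ∀ a, ∀ b ∈ Q a, ∀ᶠ i in l, b ∈ q i a) :
    ∀ b ∈ P.bind Q, ∀ᶠ i in l, b ∈ (p i).bind (q i) := by
  intro b hb
  obtain ⟨a, ha, hb⟩ := Part.mem_bind_iff.1 hb
  filter_upwards [hp a ha, hq a b hb] with i hai hbi
  exact Part.mem_bind hai hbi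

theorem eventually_mem_map {p : ι → Part α} {P : Part α} (f : α → β)
    (hp : ∀ a ∈ P, ∀ᶠ i in l, a ∈ p i) : ∀ b ∈ P.map f, ∀ᶠ i in l, b ∈ (p i).map f := by
  intro b hb
  obtain ⟨a, ha, rfl⟩ := (Part.mem_map_iff f).1 hb
  exact (hp a ha).mono fun i => Part.mem_map f

theorem eventually_mem_rfind {p : ι → ℕ →. Bool} {P : ℕ →. Bool}
    (hp : ∀ n, ∀ b ∈ P n, ∀ᶠ i in l, b ∈ p i n) :
    ∀ n ∈ Nat.rfind P, ∀ᶠ i in l, n ∈ Nat.rfind (p i) := by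
  intro n hn
  obtain ⟨htrue, hfalse⟩ := Nat.mem_rfind.1 hn
  have hlt : ∀ᶠ i in l, ∀ m ∈ Finset.range n, false ∈ p i m :=
    (eventually_all_finset _).2 fun m hm => hp m _ (hfalse (Finset.mem_range.1 hm))
  filter_upwards [hp n _ htrue, hlt] with i hi hlti
  exact Nat.mem_rfind.2 ⟨hi, fun hm => hlti _ (Finset.mem_range.2 hm)⟩

/-- A halting oracle computation makes finitely many queries. -/
theorem eventually_mem_evalo {O : ι → ℕ →. ℕ} {P : ℕ →. ℕ}
    (hO : ∀ x, ∀ v ∈ P x, ∀ᶠ i in l, v ∈ O i x) (c : OCode) :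
    ∀ n, ∀ v ∈ evalo P c n, ∀ᶠ i in l, v ∈ evalo (O i) c n := by
  induction c with
  | zero | succ | left | right => exact fun n v hv => Eventually.of_forall fun _ => hv
  | oracle => exact hO
  | pair f g ihf ihg =>
    intro n v hv
    obtain ⟨a, ha, b, hb, rfl⟩ := mem_evalo_pair.1 hv
    filter_upwards [ihf n a ha, ihg n b hb] with i hai hbi
    exact mem_evalo_pair.2 ⟨a, hai, b, hbi, rfl⟩
  | comp f g ihf ihg => exact fun n => eventually_mem_bind (ihg n) ihf
  | prec f g ihf ihg =>
    intro n
    simp only [evalo, Nat.unpaired]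
    induction n.unpair.2 with
    | zero => exact ihf _
    | succ k ih => exact eventually_mem_bind ih fun _ => ihg _
  | rfind' f ihf =>
    exact fun n => eventually_mem_map _ (eventually_mem_rfind fun k => eventually_mem_map _ (ihf _))

theorem evalo_mono {O P : ℕ →. ℕ} (hOP : ∀ x, O x ≤ P x) (c : OCode) (n : ℕ) :
    evalo O c n ≤ evalo P c n := fun v hv =>
  eventually_pure.1 <| eventually_mem_evalo (O := fun _ : Unit => P) (l := pure ())
    (fun x w hw => eventually_pure.2 (hOP x w hw)) c n v hv

end Continuity

section Translation

open Nat.Partrec (Code)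

theorem eval_pair_of_eq {c d : Code} {n a b : ℕ} (hc : c.eval n = Part.some a)
    (hd : d.eval n = Part.some b) : (c.pair d).eval n = Part.some (Nat.pair a b) := by
  simp [Code.eval, hc, hd, Seq.seq]

theorem eval_comp_of_eq {c d : Code} {n a : ℕ} (hd : d.eval n = Part.some a) :
    (c.comp d).eval n = c.eval a := by
  simp only [Code.eval, hd]
  exact Part.bind_some _ _

@[simp]
theorem eval_left_pair (a b : ℕ) : Code.left.eval (Nat.pair a b) = Part.some a := by
  simp [Code.eval]

@[simp]
theorem eval_right_pair (a b : ℕ) : Code.right.eval (Nat.pair a b) = Part.some b := by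
  simp [Code.eval]

/-- The code of the map `⟨⟨p, a⟩, y⟩ ↦ ⟨p, ⟨a, y⟩⟩`, which hands the parameter `p` on to a code run
inside a recursion or a search. -/
def assocCode : Code :=
  .pair (.comp .left .left) (.pair (.comp .right .left) .right)

/-- The code of the map `⟨p, ⟨a, y⟩⟩ ↦ ⟨⟨p, a⟩, y⟩`, which makes `p` part of the fixed parameter of
a recursion or a search on `y`. -/
def assocInvCode : Code :=
  .pair (.pair .left (.comp .left .right)) (.comp .right .right)

theorem eval_assocCode (p a y : ℕ) :
    assocCode.eval (Nat.pair (Nat.pair p a) y) = Part.some (Nat.pair p (Nat.pair a y)) := by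
  apply_rules [eval_pair_of_eq, eval_right_pair] <;> rw [eval_comp_of_eq (eval_left_pair _ _)]
  exacts [eval_left_pair _ _, eval_right_pair _ _]

theorem eval_assocInvCode (p a y : ℕ) :
    assocInvCode.eval (Nat.pair p (Nat.pair a y)) = Part.some (Nat.pair (Nat.pair p a) y) := by
  apply_rules [eval_pair_of_eq, eval_left_pair] <;> rw [eval_comp_of_eq (eval_right_pair _ _)]
  exacts [eval_left_pair _ _, eval_right_pair _ _]

section Congr

variable {O : ℕ →. ℕ} {f g : Code} {f' g' : OCode} {a b : ℕ}

theorem eval_prec_congr (hf : f.eval b = evalo O f' a)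
    (hg : ∀ y, g.eval (Nat.pair b y) = evalo O g' (Nat.pair a y)) (m : ℕ) :
    (f.prec g).eval (Nat.pair b m) = evalo O (.prec f' g') (Nat.pair a m) := by
  simp [Code.eval, evalo, hf, hg]

theorem eval_rfind'_congr (hf : ∀ y, f.eval (Nat.pair b y) = evalo O f' (Nat.pair a y)) (m : ℕ) :
    f.rfind'.eval (Nat.pair b m) = evalo O (.rfind' f') (Nat.pair a m) := by
  simp [Code.eval, evalo, hf]

end Congr

/-- Composition of two codes sharing their first parameter. -/
def paramComp (f g : Code) : Code :=
  .comp f (.pair .left g)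

/-- Primitive recursion from two codes sharing their first parameter. -/
def paramPrec (f g : Code) : Code :=
  .comp (.prec f (.comp g assocCode)) assocInvCode

/-- Unbounded search by a code with an additional first parameter, which the code receives at each
step. -/
def paramRfind (f : Code) : Code :=
  .comp (.rfind' (.comp f assocCode)) assocInvCode

/-- The translation of an oracle code to an ordinary code with an additional first parameter,
which is passed to the code `ℓ` along with each query to the oracle. -/
def OCode.toCode (ℓ : Code) : OCode → Code
  | .zero => .zero
  | .succ => .comp .succ .right
  | .left => .comp .left .right
  | .right => .comp .right .right
  | .oracle => ℓ
  | .pair f g => .pair (f.toCode ℓ) (g.toCode ℓ)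
  | .comp f g => paramComp (f.toCode ℓ) (g.toCode ℓ)
  | .prec f g => paramPrec (f.toCode ℓ) (g.toCode ℓ)
  | .rfind' f => paramRfind (f.toCode ℓ)

section Eval

variable {O : ℕ →. ℕ} {f g : Code} {f' g' : OCode} {p : ℕ}

theorem eval_paramComp (hf : ∀ n, f.eval (Nat.pair p n) = evalo O f' n)
    (hg : ∀ n, g.eval (Nat.pair p n) = evalo O g' n) (n : ℕ) :
    (paramComp f g).eval (Nat.pair p n) = evalo O (.comp f' g') n := by
  have hp : (Code.left.pair g).eval (Nat.pair p n) = (evalo O g' n).map (Nat.pair p) := by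
    simp [Code.eval, hg, Seq.seq]
  change ((Code.left.pair g).eval (Nat.pair p n)).bind f.eval = (evalo O g' n).bind (evalo O f')
  rw [hp]
  exact (Part.bind_map _ _ _).trans (congrArg _ (funext hf))

theorem eval_paramPrec (hf : ∀ n, f.eval (Nat.pair p n) = evalo O f' n)
    (hg : ∀ n, g.eval (Nat.pair p n) = evalo O g' n) (n : ℕ) :
    (paramPrec f g).eval (Nat.pair p n) = evalo O (.prec f' g') n := by
  rw [← Nat.pair_unpair n, paramPrec, eval_comp_of_eq (eval_assocInvCode _ _ _)]
  exact eval_prec_congr (hf _) (fun y => (eval_comp_of_eq (eval_assocCode _ _ _)).trans (hg _)) _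

theorem eval_paramRfind (hf : ∀ n, f.eval (Nat.pair p n) = evalo O f' n) (n : ℕ) :
    (paramRfind f).eval (Nat.pair p n) = evalo O (.rfind' f') n := by
  rw [← Nat.pair_unpair n, paramRfind, eval_comp_of_eq (eval_assocInvCode _ _ _)]
  exact eval_rfind'_congr (fun y => (eval_comp_of_eq (eval_assocCode _ _ _)).trans (hf _)) _

theorem eval_toCode {ℓ : Code} (hℓ : ∀ x, ℓ.eval (Nat.pair p x) = O x) (c : OCode) (n : ℕ) :
    (c.toCode ℓ).eval (Nat.pair p n) = evalo O c n := by
  induction c generalizing n with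
  | zero => rfl
  | succ | left | right => exact eval_comp_of_eq (eval_right_pair p n)
  | oracle => exact hℓ n
  | pair f g ihf ihg => simp [OCode.toCode, Code.eval, evalo, ihf, ihg]
  | comp f g ihf ihg => exact eval_paramComp ihf ihg n
  | prec f g ihf ihg => exact eval_paramPrec ihf ihg n
  | rfind' f ihf => exact eval_paramRfind ihf n

end Eval

section Primrec

theorem primrec₂_paramComp : Primrec₂ paramComp :=
  Code.primrec₂_comp.comp Primrec.fst
    (Code.primrec₂_pair.comp (Primrec.const _) Primrec.snd)

theorem primrec₂_paramPrec : Primrec₂ paramPrec :=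
  Code.primrec₂_comp.comp
    (Code.primrec₂_prec.comp Primrec.fst (Code.primrec₂_comp.comp Primrec.snd (Primrec.const _)))
    (Primrec.const _)

theorem primrec_paramRfind : Primrec paramRfind :=
  Code.primrec₂_comp.comp
    (Code.primrec_rfind'.comp (Code.primrec₂_comp.comp Primrec.id (Primrec.const _)))
    (Primrec.const _)

/-- The translation of the `n`-th oracle code, given the list `l` of the translations of its
predecessors; course-of-values recursion on it makes the translation primitive recursive. -/
def toCodeStep (ℓ : Code) (l : List Code) : Code :=
  let n := l.length - 5
  let f := l.getD (n / 4).unpair.1 .zero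
  let g := l.getD (n / 4).unpair.2 .zero
  if l.length < 5 then
    [.zero, .comp .succ .right, .comp .left .right, .comp .right .right, ℓ].getD l.length .zero
  else if n % 4 = 0 then .pair f g
  else if n % 4 = 1 then paramComp f g
  else if n % 4 = 2 then paramPrec f g
  else paramRfind f

theorem primrec_toCodeStep (ℓ : Code) : Primrec (toCodeStep ℓ) := by
  have hn : Primrec fun l : List Code => l.length - 5 :=
    Primrec.nat_sub.comp Primrec.list_length (Primrec.const 5)
  have hr : Primrec fun l : List Code => (l.length - 5) % 4 :=
    Primrec.nat_mod.comp hn (Primrec.const 4)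
  have hq : Primrec fun l : List Code => ((l.length - 5) / 4).unpair :=
    Primrec.unpair.comp (Primrec.nat_div.comp hn (Primrec.const 4))
  have hf := (Primrec.list_getD Code.zero).comp Primrec.id (Primrec.fst.comp hq)
  have hg := (Primrec.list_getD Code.zero).comp Primrec.id (Primrec.snd.comp hq)
  have eqr (k : ℕ) : PrimrecPred fun l : List Code => (l.length - 5) % 4 = k :=
    Primrec.eq.comp hr (Primrec.const k)
  exact Primrec.ite (Primrec.nat_lt.comp Primrec.list_length (Primrec.const 5))
    ((Primrec.list_getD _).comp (Primrec.const _) Primrec.list_length)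
    (Primrec.ite (eqr 0) (Code.primrec₂_pair.comp hf hg)
      (Primrec.ite (eqr 1) (primrec₂_paramComp.comp hf hg)
        (Primrec.ite (eqr 2) (primrec₂_paramPrec.comp hf hg) (primrec_paramRfind.comp hf))))

theorem toCodeStep_eq (ℓ : Code) (n : ℕ) :
    toCodeStep ℓ ((List.range n).map fun i => (OCode.ofNat i).toCode ℓ) =
      (OCode.ofNat n).toCode ℓ := by
  match n with
  | 0 | 1 | 2 | 3 | 4 => simp [toCodeStep, OCode.ofNat, OCode.toCode]
  | n + 5 =>
    have hl : (n / 4).unpair.1 < n + 5 := by have := Nat.unpair_left_le (n / 4); omega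
    have hr : (n / 4).unpair.2 < n + 5 := by have := Nat.unpair_right_le (n / 4); omega
    have h4 : n % 4 < 4 := Nat.mod_lt n (by simp)
    rw [OCode.ofNat.eq_def]
    interval_cases h : n % 4 <;>
      simp [toCodeStep, OCode.toCode, h, hl, hr]

theorem primrec_toCode_ofNat (ℓ : Code) : Primrec fun n => (OCode.ofNat n).toCode ℓ :=
  (Primrec.nat_strong_rec (fun (_ : Unit) n => (OCode.ofNat n).toCode ℓ)
    (g := fun _ l => some (toCodeStep ℓ l))
    (Primrec.option_some.comp ((primrec_toCodeStep ℓ).comp Primrec.snd))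
    fun _ n => congrArg some (toCodeStep_eq ℓ n)).comp (Primrec.const ()) Primrec.id

end Primrec

theorem exists_eval_encode_eq {α : Type*} [Primcodable α] {f : α →. ℕ} (hf : Partrec f) :
    ∃ C : Code, ∀ a, C.eval (Encodable.encode a) = f a := by
  obtain ⟨C, hC⟩ := Code.exists_code.1 hf
  refine ⟨C, fun a => ?_⟩
  simp only [hC, Encodable.encodek]
  exact (Part.bind_some _ _).trans (Part.map_id' (fun _ => rfl) _)

theorem partrec_phi {α : Type*} [Primcodable α] {J : α → ℕ →. ℕ} (hJ : Partrec₂ J) :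
    Partrec fun z : α × ℕ × ℕ => phi (J z.1) z.2.1 z.2.2 := by
  obtain ⟨ℓ, hℓ⟩ := exists_eval_encode_eq hJ
  refine (Code.eval_part.comp
    ((primrec_toCode_ofNat ℓ).to_comp.comp (Computable.fst.comp Computable.snd))
    (Primrec₂.natPair.to_comp.comp (Computable.encode.comp Computable.fst)
      (Computable.snd.comp Computable.snd))).of_eq fun z => ?_
  exact eval_toCode (fun x => hℓ (z.1, x)) _ _

end Translation

section NormalForm

open Nat.Partrec (Code)

/-- The finite oracle answering queries from the list `σ`, undefined beyond its length. -/
def listOracle (σ : List ℕ) : ℕ →. ℕ := fun x => σ[x]?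

theorem partrec₂_listOracle : Partrec₂ listOracle :=
  Computable.ofOption (Primrec.list_getElem?.to_comp.comp Computable.fst Computable.snd)

theorem phi_listOracle_le (h : ℕ → ℕ) (s e n : ℕ) :
    phi (listOracle ((List.range s).map h)) e n ≤ phi (toPFun h) e n :=
  evalo_mono (fun x v hv => by
    obtain ⟨y, hy, rfl⟩ : ∃ y, (List.range s)[x]? = some y ∧ h y = v := by
      simpa [listOracle] using hv
    obtain ⟨_, rfl⟩ := List.getElem?_eq_some_iff.1 hy
    simp [toPFun]) _ n

theorem exists_mem_phi_listOracle {h : ℕ → ℕ} {e n v : ℕ} (hv : v ∈ phi (toPFun h) e n) :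
    ∃ s, v ∈ phi (listOracle ((List.range s).map h)) e n := by
  refine (eventually_mem_evalo (l := atTop) (fun x w hw => ?_) _ n v hv).exists
  filter_upwards [eventually_gt_atTop x] with s hs
  obtain rfl : w = h x := Part.mem_some_iff.1 hw
  simp [listOracle, hs]

/-- The time bound `t.unpair.1` and the length `t.unpair.2` of the prefix of the oracle are searched
for separately because `Code.evaln k` diverges on all inputs `≥ k`, and the input grows with the
prefix. -/
theorem exists_primrec_phi_eq_rfindOpt : ∃ U : ℕ → List ℕ → ℕ → ℕ → Option ℕ,
    (Primrec fun z : (ℕ × List ℕ) × ℕ × ℕ => U z.1.1 z.1.2 z.2.1 z.2.2) ∧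
    ∀ h e n, phi (toPFun h) e n =
      Nat.rfindOpt fun t => U t.unpair.1 ((List.range t.unpair.2).map h) e n := by
  obtain ⟨C, hC⟩ := exists_eval_encode_eq (partrec_phi partrec₂_listOracle)
  refine ⟨fun t σ e n => C.evaln t (Encodable.encode (σ, e, n)),
    Code.primrec_evaln.comp (((Primrec.fst.comp Primrec.fst).pair (Primrec.const C)).pair
      (Primrec.encode.comp ((Primrec.snd.comp Primrec.fst).pair Primrec.snd))), fun h e n => ?_⟩
  have sound {t s v : ℕ} (hv : v ∈ C.evaln t (Encodable.encode ((List.range s).map h, e, n))) :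
      v ∈ phi (toPFun h) e n :=
    phi_listOracle_le h s e n v (hC (_, e, n) ▸ Code.evaln_sound hv)
  refine Part.ext fun v => ⟨fun hv => ?_, fun hv => ?_⟩
  · obtain ⟨s, hs⟩ := exists_mem_phi_listOracle hv
    obtain ⟨t, ht⟩ := Code.evaln_complete.1 ((hC (_, e, n)).symm ▸ hs)
    have hdom := Nat.rfindOpt_dom (f := fun t =>
      C.evaln t.unpair.1 (Encodable.encode ((List.range t.unpair.2).map h, e, n))) |>.2
      ⟨Nat.pair t s, v, by simpa using ht⟩
    obtain ⟨_, hr⟩ := Nat.rfindOpt_spec (Part.get_mem hdom)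
    exact Part.mem_unique (sound hr) hv ▸ Part.get_mem hdom
  · obtain ⟨_, hr⟩ := Nat.rfindOpt_spec hv
    exact sound hr

end NormalForm

section Simulation

open Primrec

theorem exists_evalo_eq_of_query (c : OCode) {g : ℕ → ℕ} {f : ℕ → ℕ → ℕ} (hg : Primrec g)
    (hf : Primrec₂ f) : ∃ d : OCode, ∀ (O : ℕ →. ℕ) (z v : ℕ),
      evalo O c (g z) = Part.some v → evalo O d z = Part.some (f z v) := by
  refine ⟨.comp (.ofPrimrec (fun y => f y.unpair.1 y.unpair.2)
    (hf.comp (fst.comp unpair) (snd.comp unpair)))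
    (.pair (.ofPrimrec _ Primrec.id) (.comp c (.ofPrimrec g hg))), fun O z v hv => ?_⟩
  rw [evalo_comp_pair_id, (evalo_comp_ofPrimrec _ _ _).trans hv]
  simp

theorem evalo_prec_zero (O : ℕ →. ℕ) (f g : OCode) (a : ℕ) :
    evalo O (.prec f g) (Nat.pair a 0) = evalo O f a := by
  simp [evalo]

theorem evalo_prec_succ_of_eq {O : ℕ →. ℕ} {f g : OCode} {a n i : ℕ}
    (h : evalo O (.prec f g) (Nat.pair a n) = Part.some i) :
    evalo O (.prec f g) (Nat.pair a (n + 1)) = evalo O g (Nat.pair a (Nat.pair n i)) := by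
  simp only [evalo, Nat.unpaired, Nat.unpair_pair] at h ⊢
  rw [h]
  exact Part.bind_some _ _

theorem exists_evalo_eq_encode_map_range (j : OCode) :
    ∃ c : OCode, ∀ (O : ℕ →. ℕ) (p : ℕ) (h : ℕ → ℕ),
      (∀ x, evalo O j (Nat.pair p x) = Part.some (h x)) →
      ∀ s, evalo O c (Nat.pair p s) = Part.some (Encodable.encode ((List.range s).map h)) := by
  have hquery : Primrec fun z : ℕ => Nat.pair z.unpair.1 z.unpair.2.unpair.1 :=
    Primrec₂.natPair.comp (fst.comp unpair) (fst.comp (unpair.comp (snd.comp unpair)))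
  have happend : Primrec₂ fun z v : ℕ => Encodable.encode
      ((Encodable.decode z.unpair.2.unpair.2 : Option (List ℕ)).getD [] ++ [v]) :=
    Primrec.encode.comp (list_concat.comp (option_getD.comp (Primrec.decode.comp (snd.comp
      (unpair.comp (snd.comp (unpair.comp fst))))) (const [])) snd)
  obtain ⟨step, hstep⟩ := exists_evalo_eq_of_query j hquery happend
  refine ⟨.prec (.ofPrimrec _ (const (Encodable.encode ([] : List ℕ)))) step,
    fun O p h hj s => ?_⟩
  induction s with
  | zero => rw [evalo_prec_zero]; simp
  | succ s ih =>
    rw [evalo_prec_succ_of_eq ih, hstep O _ (h s) (by simpa using hj s)]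
    simp [List.range_succ]

theorem evalo_rfind'_zero {O : ℕ →. ℕ} {c : OCode} {z : ℕ} {f : ℕ → ℕ}
    (h : ∀ t, evalo O c (Nat.pair z t) = Part.some (f t)) :
    evalo O (.rfind' c) (Nat.pair z 0) = Nat.rfind fun t => Part.some (decide (f t = 0)) := by
  simpa [evalo, h] using Part.map_id' (fun _ => rfl) _

theorem rfindOpt_eq_bind_rfind_isSome (Q : ℕ → Option ℕ) : Nat.rfindOpt Q =
    (Nat.rfind fun t => Part.some (Q t).isSome).bind
      fun t => Part.some (Encodable.encode (Q t)).pred := by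
  ext v
  refine Part.mem_bind_iff.trans (Iff.trans ?_ Part.mem_bind_iff.symm)
  refine exists_congr fun t => and_congr_right fun ht => ?_
  obtain ⟨w, hw⟩ := Option.isSome_iff_exists.1 (Part.mem_some_iff.1 (Nat.rfind_spec ht)).symm
  simp [hw]

theorem exists_evalo_eq_rfindOpt (q : OCode) : ∃ c : OCode, ∀ (O : ℕ →. ℕ) (z : ℕ)
    (Q : ℕ → Option ℕ), (∀ t, evalo O q (Nat.pair z t) = Part.some (Encodable.encode (Q t))) →
    evalo O c z = Nat.rfindOpt Q := by
  have hstart : Primrec fun z : ℕ => Nat.pair z 0 := Primrec₂.natPair.comp Primrec.id (const 0)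
  have hnot : Primrec fun x : ℕ => 1 - x := nat_sub.comp (const 1) Primrec.id
  refine ⟨.comp (.comp (.ofPrimrec _ Primrec.pred) q) (.pair (.ofPrimrec _ Primrec.id)
    (.comp (.rfind' (.comp (.ofPrimrec _ hnot) q)) (.ofPrimrec _ hstart))), fun O z Q hq => ?_⟩
  have hrfind : evalo O (.rfind' (.comp (.ofPrimrec _ hnot) q)) (Nat.pair z 0) =
      Nat.rfind fun t => Part.some (Q t).isSome := by
    rw [evalo_rfind'_zero fun t => (evalo_comp_of_eq (hq t)).trans (evalo_ofPrimrec _ _)]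
    refine congrArg Nat.rfind (funext fun t => ?_)
    cases Q t <;> simp
  rw [evalo_comp_pair_id, evalo_comp_ofPrimrec, hrfind,
    rfindOpt_eq_bind_rfind_isSome]
  refine congrArg _ (funext fun t => ?_)
  rw [evalo_comp_of_eq (hq t), evalo_ofPrimrec]

theorem exists_evalo_eq_phi (j : OCode) : ∃ v : OCode, ∀ (O : ℕ →. ℕ) (p : ℕ) (h : ℕ → ℕ),
    (∀ x, evalo O j (Nat.pair p x) = Part.some (h x)) →
    ∀ e n, evalo O v (Nat.pair p (Nat.pair e n)) = phi (toPFun h) e n := by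
  obtain ⟨U, hU, hphi⟩ := exists_primrec_phi_eq_rfindOpt
  obtain ⟨pre, hpre⟩ := exists_evalo_eq_encode_map_range j
  have hquery : Primrec fun z : ℕ => Nat.pair z.unpair.1.unpair.1 z.unpair.2.unpair.2 :=
    Primrec₂.natPair.comp (fst.comp (unpair.comp (fst.comp unpair)))
      (snd.comp (unpair.comp (snd.comp unpair)))
  have hrun : Primrec₂ fun z σ : ℕ => Encodable.encode (U z.unpair.2.unpair.1
      ((Encodable.decode σ).getD []) z.unpair.1.unpair.2.unpair.1
      z.unpair.1.unpair.2.unpair.2) := by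
    have hw : Primrec fun y : ℕ × ℕ => y.1.unpair.1.unpair.2.unpair :=
      unpair.comp (snd.comp (unpair.comp (fst.comp (unpair.comp fst))))
    have ht : Primrec fun y : ℕ × ℕ => y.1.unpair.2.unpair.1 :=
      fst.comp (unpair.comp (snd.comp (unpair.comp fst)))
    have hσ : Primrec fun y : ℕ × ℕ => (Encodable.decode y.2 : Option (List ℕ)).getD [] :=
      option_getD.comp (Primrec.decode.comp snd) (const [])
    exact Primrec.encode.comp (hU.comp ((ht.pair hσ).pair ((fst.comp hw).pair (snd.comp hw))))
  obtain ⟨q, hq⟩ := exists_evalo_eq_of_query pre hquery hrun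
  obtain ⟨c, hc⟩ := exists_evalo_eq_rfindOpt q
  refine ⟨c, fun O p h hj e n => (hc O _ _ fun t => ?_).trans (hphi h e n).symm⟩
  rw [hq O _ _ (by simpa using hpre O p h hj t.unpair.2)]
  simp

end Simulation

section K2

theorem mem_k2App {g h r : ℕ → ℕ} :
    r ∈ k2App g h ↔ ∀ k, r k ∈ phi (pjoin (toPFun g) (toPFun h)) (g 0) k :=
  ⟨fun ⟨hdom, hr⟩ k => hr ▸ Part.get_mem (hdom k),
    fun hr => ⟨fun k => (hr k).1, funext fun k => (hr k).2⟩⟩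

theorem mem_subApp {α : Type*} {app : α → α → Part α} {P : α → Prop} {a b c : Subtype P} :
    c ∈ subApp app P a b ↔ c.1 ∈ app a.1 b.1 := by
  obtain ⟨c, hc⟩ := c
  simp [subApp, Part.mem_assert_iff, hc]

theorem mem_k2XApp {Y : Set ℕ} {a b c : K2el Y} :
    c ∈ k2XApp Y a b ↔ ∀ k, c.1 k ∈ phi (pjoin (toPFun a.1) (toPFun b.1)) (a.1 0) k :=
  (mem_subApp (app := k2App)).trans mem_k2App

@[simp]
theorem pjoin_two_mul (f g : ℕ →. ℕ) (x : ℕ) : pjoin f g (2 * x) = f x := by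
  simp [pjoin]

@[simp]
theorem pjoin_two_mul_add_one (f g : ℕ →. ℕ) (x : ℕ) : pjoin f g (2 * x + 1) = g x := by
  simp [pjoin, Nat.add_mod, Nat.mul_add_div]

end K2

section Tag

open Primrec

/-- The sequence `e, n, χ 0, χ 1, …`, which represents the number `n` in `K2` when `e` is an index
of the application of `K1` relativized to `χ`. -/
def tag (e : ℕ) (χ : ℕ → ℕ) (n : ℕ) : ℕ → ℕ
  | 0 => e
  | 1 => n
  | x + 2 => χ x

theorem recursiveIn_tag {O : ℕ →. ℕ} {χ : ℕ → ℕ} (hχ : RecursiveIn O (toPFun χ)) (e n : ℕ) :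
    RecursiveIn O (toPFun (tag e χ n)) := by
  obtain ⟨c, hc⟩ := hχ
  have hshift : Primrec fun k : ℕ => k - 2 := nat_sub.comp Primrec.id (const 2)
  have hcases : Primrec₂ fun k v : ℕ => if k = 0 then e else if k = 1 then n else v :=
    Primrec.ite (Primrec.eq.comp fst (const 0)) (const e)
      (Primrec.ite (Primrec.eq.comp fst (const 1)) (const n) snd)
  obtain ⟨d, hd⟩ := exists_evalo_eq_of_query c hshift hcases
  refine ⟨d, funext fun k => ?_⟩
  rw [hd O k (χ (k - 2)) (congrFun hc _)]
  match k with
  | 0 | 1 | k + 2 => rfl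

theorem exists_evalo_pjoin_tag_eq_phi : ∃ V : OCode, ∀ (e : ℕ) (χ : ℕ → ℕ) (a m k : ℕ),
    evalo (pjoin (toPFun (tag e χ a)) (toPFun (tag e χ m))) V k = phi (toPFun χ) a m := by
  have hquery : Primrec fun z : ℕ => 2 * (z.unpair.2 + 2) :=
    nat_mul.comp (const 2) (nat_add.comp (snd.comp unpair) (const 2))
  obtain ⟨v, hv⟩ := exists_evalo_eq_phi (.comp .oracle (.ofPrimrec _ hquery))
  refine ⟨.comp v (.pair .zero (.pair (.comp .oracle (.ofPrimrec _ (const 2)))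
    (.comp .oracle (.ofPrimrec _ (const 3))))), fun e χ a m k => ?_⟩
  set O := pjoin (toPFun (tag e χ a)) (toPFun (tag e χ m))
  have hzero : evalo O .zero k = Part.some 0 := rfl
  have ha : evalo O (.comp .oracle (.ofPrimrec _ (const 2))) k = Part.some a :=
    (evalo_comp_ofPrimrec _ _ _).trans (pjoin_two_mul _ _ 1)
  have hm : evalo O (.comp .oracle (.ofPrimrec _ (const 3))) k = Part.some m :=
    (evalo_comp_ofPrimrec _ _ _).trans (pjoin_two_mul_add_one _ _ 1)
  have hχ (x : ℕ) : evalo O (.comp .oracle (.ofPrimrec _ hquery)) (Nat.pair 0 x) =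
      Part.some (χ x) := by
    rw [evalo_comp_ofPrimrec, Nat.unpair_pair]
    exact pjoin_two_mul _ _ (x + 2)
  rw [evalo_comp_of_eq (evalo_pair_of_eq hzero (evalo_pair_of_eq ha hm)), hv O 0 χ hχ]

theorem exists_evalo_pjoin_tag_eq_tag : ∃ E : OCode, ∀ (e : ℕ) (χ : ℕ → ℕ) (a m c : ℕ),
    c ∈ phi (toPFun χ) a m →
    ∀ k, evalo (pjoin (toPFun (tag e χ a)) (toPFun (tag e χ m))) E k =
      Part.some (tag e χ c k) := by
  obtain ⟨V, hV⟩ := exists_evalo_pjoin_tag_eq_phi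
  have hdouble : Primrec fun k : ℕ => 2 * k := nat_mul.comp (const 2) Primrec.id
  have hcases : Primrec fun z : ℕ =>
      if z.unpair.1 = 1 then z.unpair.2.unpair.1 else z.unpair.2.unpair.2 :=
    Primrec.ite (Primrec.eq.comp (fst.comp unpair) (const 1))
      (fst.comp (unpair.comp (snd.comp unpair))) (snd.comp (unpair.comp (snd.comp unpair)))
  refine ⟨.comp (.ofPrimrec _ hcases) (.pair (.ofPrimrec _ Primrec.id)
    (.pair V (.comp .oracle (.ofPrimrec _ hdouble)))), fun e χ a m c hc k => ?_⟩
  set O := pjoin (toPFun (tag e χ a)) (toPFun (tag e χ m))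
  have hvalue : evalo O V k = Part.some c := (hV e χ a m k).trans (Part.eq_some_iff.2 hc)
  have hcopy : evalo O (.comp .oracle (.ofPrimrec _ hdouble)) k = Part.some (tag e χ a k) :=
    (evalo_comp_ofPrimrec _ _ _).trans (pjoin_two_mul _ _ k)
  rw [evalo_comp_of_eq (evalo_pair_of_eq (evalo_ofPrimrec _ _) (evalo_pair_of_eq hvalue hcopy)),
    evalo_ofPrimrec]
  match k with
  | 0 | 1 | k + 2 => simp [tag]

theorem exists_isPCAEmbedding_of_turingLE {X Y : Set ℕ} (hXY : TuringLE X Y) :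
    ∃ f : ℕ → K2el Y, IsPCAEmbedding (k1App X) (k2XApp Y) f := by
  obtain ⟨E, hE⟩ := exists_evalo_pjoin_tag_eq_tag
  obtain ⟨e, rfl⟩ := OCode.ofNat_surjective E
  refine ⟨fun n => ⟨tag e (X.indicator 1) n, recursiveIn_tag hXY e n⟩,
    fun n m hnm => congrFun (congrArg Subtype.val hnm) 1,
    fun a m c hc => mem_k2XApp.2 fun k => ?_⟩
  exact Part.eq_some_iff.1 (hE e _ a m c hc k)

end Tag

section Orbit

open Primrec

theorem pjoin_toPFun (g h : ℕ → ℕ) : pjoin (toPFun g) (toPFun h) =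
    toPFun fun x => if x % 2 = 0 then g (x / 2) else h (x / 2) :=
  funext fun _ => (apply_ite Part.some _ _ _).symm

theorem exists_evalo_eq_phi_pjoin {O : ℕ →. ℕ} {g : ℕ → ℕ} (hg : RecursiveIn O (toPFun g))
    (j : OCode) : ∃ v : OCode, ∀ (p : ℕ) (h : ℕ → ℕ),
      (∀ x, evalo O j (Nat.pair p x) = Part.some (h x)) →
      ∀ e n, evalo O v (Nat.pair p (Nat.pair e n)) =
        phi (pjoin (toPFun g) (toPFun h)) e n := by
  obtain ⟨c, hc⟩ := hg
  have hhalf : Primrec fun z : ℕ => z.unpair.2 / 2 :=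
    nat_div.comp (snd.comp unpair) (const 2)
  have hcases : Primrec fun z : ℕ => if z.unpair.1.unpair.2 % 2 = 0 then z.unpair.2.unpair.1
      else z.unpair.2.unpair.2 :=
    Primrec.ite (Primrec.eq.comp (nat_mod.comp (snd.comp (unpair.comp (fst.comp unpair)))
      (const 2)) (const 0))
      (fst.comp (unpair.comp (snd.comp unpair))) (snd.comp (unpair.comp (snd.comp unpair)))
  obtain ⟨v, hv⟩ := exists_evalo_eq_phi (.comp (.ofPrimrec _ hcases)
    (.pair (.ofPrimrec _ Primrec.id) (.pair (.comp c (.ofPrimrec _ hhalf))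
      (.comp j (.ofPrimrec _ (Primrec₂.natPair.comp (fst.comp unpair) hhalf))))))
  refine ⟨v, fun p h hj e n => ?_⟩
  rw [pjoin_toPFun]
  refine hv O p _ (fun x => ?_) e n
  have hgx : evalo O (.comp c (.ofPrimrec _ hhalf)) (Nat.pair p x) = Part.some (g (x / 2)) := by
    rw [evalo_comp_ofPrimrec, hc, Nat.unpair_pair]; rfl
  have hhx : evalo O (.comp j (.ofPrimrec _ (Primrec₂.natPair.comp (fst.comp unpair) hhalf)))
      (Nat.pair p x) = Part.some (h (x / 2)) := by
    rw [evalo_comp_ofPrimrec, Nat.unpair_pair]; exact hj _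
  rw [evalo_comp_of_eq (evalo_pair_of_eq (evalo_ofPrimrec _ _) (evalo_pair_of_eq hgx hhx)),
    evalo_ofPrimrec]
  simp

theorem exists_evalo_eq_phi_self (χ : ℕ → ℕ) : ∃ u : OCode, ∀ e n,
    evalo (toPFun χ) u (Nat.pair e n) = phi (toPFun χ) e n := by
  obtain ⟨v, hv⟩ := exists_evalo_eq_phi (.comp .oracle .right)
  refine ⟨.comp v (.pair .zero (.ofPrimrec _ Primrec.id)), fun e n => ?_⟩
  have hzero : evalo (toPFun χ) .zero (Nat.pair e n) = Part.some 0 := rfl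
  rw [evalo_comp_of_eq (evalo_pair_of_eq hzero (evalo_ofPrimrec _ _))]
  exact hv _ 0 χ (fun x => evalo_comp_of_eq (by simp [evalo])) e n

-- `d` is an index of a code that expects its own index as the parameter `p` of `⟨⟨p, k⟩, n⟩`, so
-- that the recursion on `n` can evaluate `F n` away from `k` without the recursion theorem.
theorem exists_phi_self_eq_orbit {χ g : ℕ → ℕ} {F : ℕ → ℕ → ℕ}
    (hg : RecursiveIn (toPFun χ) (toPFun g)) (hF₀ : RecursiveIn (toPFun χ) (toPFun (F 0)))
    (hF : ∀ n, F (n + 1) ∈ k2App g (F n)) :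
    ∃ d, ∀ n k, phi (toPFun χ) d (Nat.pair (Nat.pair d k) n) = Part.some (F n k) := by
  obtain ⟨base, hbase⟩ := hF₀
  obtain ⟨u, hu⟩ := exists_evalo_eq_phi_self χ
  have hparam := unpair.comp (fst.comp unpair)
  have hself : Primrec fun z : ℕ => Nat.pair z.unpair.1.unpair.1
      (Nat.pair (Nat.pair z.unpair.1.unpair.1 z.unpair.2) z.unpair.1.unpair.2) :=
    Primrec₂.natPair.comp (fst.comp hparam) (Primrec₂.natPair.comp
      (Primrec₂.natPair.comp (fst.comp hparam) (snd.comp unpair)) (snd.comp hparam))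
  obtain ⟨v, hv⟩ := exists_evalo_eq_phi_pjoin hg (.comp u (.ofPrimrec _ hself))
  have hstep : Primrec fun z : ℕ => Nat.pair (Nat.pair z.unpair.1.unpair.1 z.unpair.2.unpair.1)
      (Nat.pair (g 0) z.unpair.1.unpair.2) :=
    Primrec₂.natPair.comp (Primrec₂.natPair.comp (fst.comp hparam)
      (fst.comp (unpair.comp (snd.comp unpair))))
      (Primrec₂.natPair.comp (const _) (snd.comp hparam))
  obtain ⟨d, hd⟩ := OCode.ofNat_surjective
    (.prec (.comp base .right) (.comp v (.ofPrimrec _ hstep)))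
  refine ⟨d, fun n => ?_⟩
  induction n with
  | zero =>
    intro k
    rw [phi, hd, evalo_prec_zero, evalo_comp_of_eq (a := k) (by simp [evalo]), hbase, toPFun]
  | succ n ih =>
    intro k
    have hFn (x : ℕ) : evalo (toPFun χ) (.comp u (.ofPrimrec _ hself))
        (Nat.pair (Nat.pair d n) x) = Part.some (F n x) := by
      rw [evalo_comp_ofPrimrec, hu]
      simpa using ih x
    have hprev := ih k
    rw [phi, hd] at hprev ⊢
    rw [evalo_prec_succ_of_eq hprev, evalo_comp_ofPrimrec]
    simp only [Nat.unpair_pair]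
    rw [hv _ _ hFn]
    exact Part.eq_some_iff.2 (mem_k2App.1 (hF n) k)

theorem exists_evalo_eq_orbit {χ g : ℕ → ℕ} {F : ℕ → ℕ → ℕ}
    (hg : RecursiveIn (toPFun χ) (toPFun g)) (hF₀ : RecursiveIn (toPFun χ) (toPFun (F 0)))
    (hF : ∀ n, F (n + 1) ∈ k2App g (F n)) :
    ∃ c : OCode, ∀ n k, evalo (toPFun χ) c (Nat.pair n k) = Part.some (F n k) := by
  obtain ⟨d, hd⟩ := exists_phi_self_eq_orbit hg hF₀ hF
  have hinput : Primrec fun z : ℕ => Nat.pair (Nat.pair d z.unpair.2) z.unpair.1 :=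
    Primrec₂.natPair.comp (Primrec₂.natPair.comp (const d) (snd.comp unpair)) (fst.comp unpair)
  refine ⟨.comp (.ofNat d) (.ofPrimrec _ hinput), fun n k => ?_⟩
  rw [evalo_comp_ofPrimrec, Nat.unpair_pair]
  exact hd n k

theorem turingLE_of_isPCAEmbedding {X Y : Set ℕ} {f : ℕ → K2el Y}
    (hf : IsPCAEmbedding (k1App X) (k2XApp Y) f) : TuringLE X Y := by
  obtain ⟨hinj, happ⟩ := hf
  have hsucc (n : ℕ) : (f (n + 1)).1 ∈ k2App (f 1).1 (f n).1 :=
    mem_subApp.1 (happ 1 n (n + 1) (by simp [k1App, phi, OCode.ofNat, evalo]))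
  have hchar (n : ℕ) : (f (X.indicator (fun _ => 1) n)).1 ∈ k2App (f 4).1 (f n).1 :=
    mem_subApp.1 (happ 4 n _ (by simp [k1App, phi, OCode.ofNat, evalo, chi]))
  obtain ⟨k, hk⟩ := Function.ne_iff.1 fun h => zero_ne_one (hinj (Subtype.ext h))
  obtain ⟨c, hc⟩ := exists_evalo_eq_orbit (χ := Y.indicator fun _ => 1) (F := fun n => (f n).1)
    (f 1).2 (f 0).2 hsucc
  obtain ⟨v, hv⟩ := exists_evalo_eq_phi_pjoin (f 4).2 c
  have hinput : Primrec fun n : ℕ => Nat.pair n (Nat.pair ((f 4).1 0) k) :=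
    Primrec₂.natPair.comp Primrec.id (const _)
  have hdecide : Primrec₂ fun _ w : ℕ => if w = (f 1).1 k then 1 else 0 :=
    Primrec.ite (Primrec.eq.comp snd (const _)) (const 1) (const 0)
  obtain ⟨d, hd⟩ := exists_evalo_eq_of_query v hinput hdecide
  refine ⟨d, funext fun n => ?_⟩
  rw [hd _ n ((f (X.indicator (fun _ => 1) n)).1 k)
    ((hv n _ (hc n) _ _).trans (Part.eq_some_iff.2 (mem_k2App.1 (hchar n) k)))]
  by_cases hn : n ∈ X <;> simp [chi, hn, hk]

end Orbit

theorem stmt9 (X Y : Set ℕ) :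
    (∃ f : ℕ → K2el Y, IsPCAEmbedding (k1App X) (k2XApp Y) f) ↔
      TuringLE X Y :=
  ⟨fun ⟨_, hf⟩ => turingLE_of_isPCAEmbedding hf, exists_isPCAEmbedding_of_turingLE⟩

end PCAEmb
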